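/- Let $Q_1 = \frac{1}{\sqrt{M}}(1,\dots,1)^{\intercal} \in \mathbb{R}^M$ and let $Q_2 \in \mathbb{R}^{M\times(M-1)}$ be any matrix whose columns form an orthonormal basis of the orthogonal complement of $Q_1$. Under the stability conditions $\kappa_1 > 0$, $\kappa_1 + 4\kappa_2 > 0$, for each $\xi \in (0, 2\pi)$ the matrix $Q_2^{\intercal}\widehat{\mathcal{A}}(\xi)Q_2$ is invertible and $(Q_2^{\intercal}\widehat{\mathcal{A}}Q_2)^{-1} = Q_2^{\intercal}\widehat{\mathcal{A}}^{-1}Q_2 - Q_2^{\intercal}\widehat{\mathcal{A}}^{-1}Q_1(Q_1^{\intercal}\widehat{\mathcal{A}}^{-1}Q_1)^{-1}Q_1^{\intercal}\widehat{\mathcal{A}}^{-1}Q_2$. -/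

import Mathlib

open Matrix Complex Real

noncomputable def A0 (M : ℕ) (κ1 κ2 : ℝ) : Matrix (Fin M) (Fin M) ℂ := fun i j =>
  if (i : ℤ) = (j : ℤ) then 2 * ((κ1 : ℂ) + κ2)
  else if |(i : ℤ) - (j : ℤ)| = 1 then -(κ1 : ℂ)
  else if |(i : ℤ) - (j : ℤ)| = 2 then -(κ2 : ℂ) else 0

noncomputable def A1 (M : ℕ) (κ1 κ2 : ℝ) : Matrix (Fin M) (Fin M) ℂ := fun i j =>
  if (i : ℕ) = 0 ∧ (j : ℕ) = M - 1 then -(κ1 : ℂ)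
  else if ((i : ℕ) = 0 ∧ (j : ℕ) = M - 2) ∨ ((i : ℕ) = 1 ∧ (j : ℕ) = M - 1) then -(κ2 : ℂ)
  else 0

noncomputable def Ahat (M : ℕ) (κ1 κ2 ξ : ℝ) : Matrix (Fin M) (Fin M) ℂ :=
  A0 M κ1 κ2 + Complex.exp (-(ξ : ℂ) * Complex.I) • A1 M κ1 κ2
    + Complex.exp ((ξ : ℂ) * Complex.I) • (A1 M κ1 κ2)ᵀ

noncomputable def q1 (M : ℕ) : Fin M → ℂ := fun _ => (1 / Real.sqrt M : ℝ)

noncomputable def q1r (M : ℕ) : Fin M → ℝ := fun _ => 1 / Real.sqrt M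

noncomputable def q1col (M : ℕ) : Matrix (Fin M) (Fin 1) ℂ := fun _ _ => (1 / Real.sqrt M : ℝ)


open scoped ComplexOrder

/-- twisted shift -/
noncomputable def tshift (M : ℕ) (c : ℂ) : Matrix (Fin M) (Fin M) ℂ := fun i j =>
  if (j : ℕ) = i + 1 then 1 else if (i : ℕ) + 1 = M ∧ (j : ℕ) = 0 then c else 0

lemma tshift_mulVec (M : ℕ) (hM : 5 ≤ M) (c : ℂ) (v : Fin M → ℂ) (i : Fin M) :
    (tshift M c *ᵥ v) i =
      if h : (i : ℕ) + 1 < M then v ⟨i + 1, h⟩ else c * v ⟨0, by omega⟩ := by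
  unfold Matrix.mulVec dotProduct
  split_ifs with h
  · rw [Finset.sum_eq_single (⟨i + 1, h⟩ : Fin M)]
    · simp [tshift]
    · intro b _ hb
      have : (b : ℕ) ≠ i + 1 := fun e => hb (Fin.ext e)
      have h' : (i : ℕ) + 1 ≠ M := by omega
      simp [tshift, this, h']
    · simp
  · have hi := i.2
    rw [Finset.sum_eq_single (⟨0, by omega⟩ : Fin M)]
    · have h' : (i : ℕ) + 1 = M := by omega
      have h0 : 0 ≠ M := by omega
      simp [tshift, h', h0]
    · intro b _ hb
      have : (b : ℕ) ≠ 0 := fun e => hb (Fin.ext e)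
      have h' : (b : ℕ) ≠ i + 1 := by omega
      simp [tshift, this, h']
    · simp

lemma tshift_mul (M : ℕ) (hM : 5 ≤ M) (c : ℂ) (B : Matrix (Fin M) (Fin M) ℂ) (i j : Fin M) :
    (tshift M c * B) i j =
      if h : (i : ℕ) + 1 < M then B ⟨i + 1, h⟩ j else c * B ⟨0, by omega⟩ j :=
  tshift_mulVec M hM c (fun k => B k j) i

lemma tshift_unitary (M : ℕ) (hM : 5 ≤ M) (c : ℂ) (hc : c * star c = 1) :
    tshift M c * (tshift M c)ᴴ = 1 := by
  ext i j
  rw [tshift_mul M hM, Matrix.one_apply]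
  have hi := i.2
  have hj := j.2
  simp only [Matrix.conjTranspose_apply, tshift, Fin.ext_iff]
  by_cases a : (i : ℕ) + 1 < M <;> by_cases b : (j : ℕ) + 1 < M <;> by_cases d : (i : ℕ) = j <;>
    first
    | omega
    | (simp (disch := omega) only [if_pos, if_neg, dif_pos, dif_neg, star_zero, star_one,
        mul_zero]; done)
    | (simp (disch := omega) only [if_pos, if_neg, dif_pos, dif_neg]; simp only [and_true, if_pos (show (j : ℕ) + 1 = M by omega)]; exact hc)

set_option maxHeartbeats 4000000 in
lemma Ahat_eq (M : ℕ) (hM : 5 ≤ M) (κ1 κ2 ξ : ℝ) (S : Matrix (Fin M) (Fin M) ℂ)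
    (hS : S = tshift M (Complex.exp ((ξ : ℂ) * Complex.I))) :
    Ahat M κ1 κ2 ξ = (κ1 : ℂ) • (2 - S - Sᴴ) + (κ2 : ℂ) • (2 - S * S - (S * S)ᴴ) := by
  have hc : star (Complex.exp ((ξ : ℂ) * Complex.I)) = Complex.exp (-(ξ : ℂ) * Complex.I) := by
    rw [Complex.star_def, ← Complex.exp_conj]; simp
  subst hS
  ext i j
  have hi := i.2
  have hj := j.2
  have e2 : (2 : Matrix (Fin M) (Fin M) ℂ) i j = if (i : ℕ) = j then 2 else 0 := by
    rw [← Matrix.diagonal_ofNat, Matrix.diagonal_apply]; simp [Fin.ext_iff]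
  simp only [Ahat, Matrix.add_apply, Matrix.smul_apply, Matrix.sub_apply,
    Matrix.conjTranspose_apply, Matrix.transpose_apply, tshift_mul M hM, e2]
  generalize Complex.exp ((ξ : ℂ) * Complex.I) = c at *
  rw [← hc]
  simp only [A0, A1, tshift]
  have a1 : |((i : ℕ) : ℤ) - ((j : ℕ) : ℤ)| = 1 ↔ ((i : ℕ) = j + 1 ∨ (j : ℕ) = i + 1) := by
    rw [abs_eq (by norm_num)]; omega
  have a2 : |((i : ℕ) : ℤ) - ((j : ℕ) : ℤ)| = 2 ↔ ((i : ℕ) = j + 2 ∨ (j : ℕ) = i + 2) := by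
    rw [abs_eq (by norm_num)]; omega
  simp only [a1, a2, Nat.cast_inj]
  obtain ⟨i, _⟩ := i
  obtain ⟨j, _⟩ := j
  simp only at *
  clear a1 a2 e2 hi hj
  have key : i = j ∨ i = j + 1 ∨ j = i + 1 ∨ i = j + 2 ∨ j = i + 2 ∨ (i = 0 ∧ j = M - 1) ∨
    (j = 0 ∧ i = M - 1) ∨ (i = 0 ∧ j = M - 2) ∨ (j = 0 ∧ i = M - 2) ∨ (i = 1 ∧ j = M - 1) ∨
    (j = 1 ∧ i = M - 1) ∨ (i ≠ j ∧ i ≠ j + 1 ∧ j ≠ i + 1 ∧ i ≠ j + 2 ∧ j ≠ i + 2 ∧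
      ¬ (i = 0 ∧ j = M - 1) ∧
    ¬ (j = 0 ∧ i = M - 1) ∧ ¬(i = 0 ∧ j = M - 2) ∧ ¬ (j = 0 ∧ i = M - 2) ∧
      ¬ (i = 1 ∧ j = M - 1) ∧ ¬ (j = 1 ∧ i = M - 1)) := by omega
  have z : star (0 : ℂ) = 0 := star_zero _
  have o : star (1 : ℂ) = 1 := star_one _
  rcases key with h | h | h | h | h | h | h | h | h | h | h | h <;>
    by_cases a : i + 1 < M <;> by_cases b : j + 1 < M <;>
    first
    | omega
    | (simp (disch := omega) only [if_pos, if_neg, dif_pos, dif_neg, z, o, smul_eq_mul, star_mul]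
       ring)

lemma tshift_inj (M : ℕ) (hM : 5 ≤ M) (c : ℂ) (hc : c ≠ 1) :
    Function.Injective (1 - tshift M c).mulVec := by
  rw [← Matrix.coe_mulVecLin, ← LinearMap.ker_eq_bot, LinearMap.ker_eq_bot']
  intro v hv
  rw [Matrix.mulVecLin_apply, Matrix.sub_mulVec, Matrix.one_mulVec, sub_eq_zero] at hv
  have hv' := fun i => (congrFun hv i).trans (tshift_mulVec M hM c v i)
  have h0 : ∀ n (h : n < M), v ⟨n, h⟩ = v ⟨0, by omega⟩ := by
    intro n
    induction n with
    | zero => intro h; rfl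
    | succ n ih =>
      intro h
      rw [← ih (by omega), hv' ⟨n, by omega⟩]
      simp [h]
  have hl := hv' ⟨M - 1, by omega⟩
  have : ¬ (M - 1 + 1 < M) := by omega
  simp only [this, dite_false] at hl
  rw [h0] at hl
  have z : v ⟨0, by omega⟩ = 0 := by
    have : (c - 1) * v ⟨0, by omega⟩ = 0 := by rw [sub_mul, ← hl]; ring
    exact (mul_eq_zero.1 this).resolve_left (sub_ne_zero.2 hc)
  ext i
  rw [Pi.zero_apply, ← z]
  exact h0 i i.2

lemma Ahat_posDef (M : ℕ) (hM : 5 ≤ M) (κ1 κ2 : ℝ)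
    (h1 : 0 < κ1) (h2 : 0 < κ1 + 4 * κ2) (ξ : ℝ) (hξ : ξ ∈ Set.Ioo 0 (2 * Real.pi)) :
    (Ahat M κ1 κ2 ξ).PosDef := by
  have hc : star (Complex.exp ((ξ : ℂ) * Complex.I)) = Complex.exp (-(ξ : ℂ) * Complex.I) := by
    rw [Complex.star_def, ← Complex.exp_conj]; simp
  have hc1 : Complex.exp ((ξ : ℂ) * Complex.I) * star (Complex.exp ((ξ : ℂ) * Complex.I)) = 1 := by
    rw [hc, ← Complex.exp_add]; simp
  have hne : Complex.exp ((ξ : ℂ) * Complex.I) ≠ 1 := by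
    intro h
    rw [Complex.exp_eq_one_iff] at h
    obtain ⟨n, hn⟩ := h
    have hn' : (ξ : ℂ) = ((n * (2 * Real.pi) : ℝ) : ℂ) := by
      apply mul_right_cancel₀ Complex.I_ne_zero
      rw [hn]; push_cast; ring
    have hn2 : ξ = n * (2 * Real.pi) := by exact_mod_cast hn'
    obtain ⟨ha, hb⟩ := hξ
    have hp := Real.two_pi_pos
    rw [hn2] at ha hb
    have p1 : (0 : ℝ) < n := by
      by_contra! hh
      nlinarith
    have p2 : (n : ℝ) < 1 := by
      by_contra! hh
      nlinarith
    have p1' : (0 : ℤ) < n := by exact_mod_cast p1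
    have p2' : (n : ℤ) < 1 := by exact_mod_cast p2
    omega
  have hinj := tshift_inj M hM _ hne
  have hST := tshift_unitary M hM _ hc1
  have hA := Ahat_eq M hM κ1 κ2 ξ _ rfl
  generalize tshift M (Complex.exp ((ξ : ℂ) * Complex.I)) = S at *
  have hTS : Sᴴ * S = 1 := mul_eq_one_comm.1 hST
  have hL := Matrix.PosDef.conjTranspose_mul_self (1 - S) hinj
  have eL : (1 - S)ᴴ * (1 - S) = 2 - S - Sᴴ := by
    rw [Matrix.conjTranspose_sub, Matrix.conjTranspose_one]
    have : (1 - Sᴴ) * (1 - S) = 1 - S - Sᴴ + Sᴴ * S := by noncomm_ring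
    rw [this, hTS, ← one_add_one_eq_two]; abel
  rw [eL] at hL
  rw [hA]
  by_cases hk : 0 ≤ κ2
  · have hN := Matrix.posSemidef_conjTranspose_mul_self (1 - S * S)
    have eN : (1 - S * S)ᴴ * (1 - S * S) = 2 - S * S - (S * S)ᴴ := by
      have hu : (S * S)ᴴ * (S * S) = 1 := by
        rw [Matrix.conjTranspose_mul, Matrix.mul_assoc, ← Matrix.mul_assoc Sᴴ S S, hTS,
          Matrix.one_mul, hTS]
      rw [Matrix.conjTranspose_sub, Matrix.conjTranspose_one, sub_mul, mul_sub, mul_sub, hu,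
        ← one_add_one_eq_two]
      simp only [one_mul, mul_one]; abel
    rw [eN] at hN
    exact (hL.smul (a := (κ1 : ℂ)) (by exact_mod_cast h1)).add_posSemidef
      (hN.smul (a := (κ2 : ℂ)) (by exact_mod_cast hk))
  · have hN := Matrix.posSemidef_conjTranspose_mul_self (2 - S - Sᴴ)
    rw [hL.isHermitian.eq] at hN
    have eN : (κ1 : ℂ) • (2 - S - Sᴴ) + (κ2 : ℂ) • (2 - S * S - (S * S)ᴴ) =
        ((κ1 + 4 * κ2 : ℝ) : ℂ) • (2 - S - Sᴴ)
          + ((-κ2 : ℝ) : ℂ) • ((2 - S - Sᴴ) * (2 - S - Sᴴ)) := by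
      have : (2 - S - Sᴴ) * (2 - S - Sᴴ) =
          4 • 1 - 4 • S - 4 • Sᴴ + S * S + Sᴴ * Sᴴ + S * Sᴴ + Sᴴ * S := by
        rw [← one_add_one_eq_two]; noncomm_ring
      have f1 : (2 : Matrix (Fin M) (Fin M) ℂ) = 2 • 1 := by norm_num
      rw [this, hST, hTS, Matrix.conjTranspose_mul, f1]
      push_cast
      module
    rw [eN]
    exact (hL.smul (a := ((κ1 + 4 * κ2 : ℝ) : ℂ)) (by exact_mod_cast h2)).add_posSemidef
      (hN.smul (a := ((-κ2 : ℝ) : ℂ)) (by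
        have : 0 ≤ -κ2 := by linarith
        exact_mod_cast this))

theorem schur_inverse_formula_for_Q2 (M : ℕ) (hM : 5 ≤ M) (κ1 κ2 : ℝ)
    (h1 : 0 < κ1) (h2 : 0 < κ1 + 4 * κ2)
    (Q2 : Matrix (Fin M) (Fin (M - 1)) ℝ)
    (horth : Q2ᵀ * Q2 = 1) (hcompl : Q2 * Q2ᵀ = 1 - Matrix.vecMulVec (q1r M) (q1r M))
    (ξ : ℝ) (hξ : ξ ∈ Set.Ioo 0 (2 * Real.pi)) :
    IsUnit ((Q2.map Complex.ofReal)ᵀ * Ahat M κ1 κ2 ξ * Q2.map Complex.ofReal) ∧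
      ((Q2.map Complex.ofReal)ᵀ * Ahat M κ1 κ2 ξ * Q2.map Complex.ofReal)⁻¹ =
        (Q2.map Complex.ofReal)ᵀ * (Ahat M κ1 κ2 ξ)⁻¹ * Q2.map Complex.ofReal -
          ((Q2.map Complex.ofReal)ᵀ * (Ahat M κ1 κ2 ξ)⁻¹ * q1col M) *
            ((q1col M)ᵀ * (Ahat M κ1 κ2 ξ)⁻¹ * q1col M)⁻¹ *
              ((q1col M)ᵀ * (Ahat M κ1 κ2 ξ)⁻¹ * Q2.map Complex.ofReal) := by
  have hA := Ahat_posDef M hM κ1 κ2 h1 h2 ξ hξ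
  have o1 : (Q2.map Complex.ofReal)ᵀ * Q2.map Complex.ofReal = 1 := by
    have := congrArg (fun B => B.map Complex.ofRealHom) horth
    simp only [Matrix.map_mul] at this
    rw [Matrix.map_one _ (map_zero _) (map_one _)] at this
    exact this
  have o2 : Q2.map Complex.ofReal * (Q2.map Complex.ofReal)ᵀ = 1 - q1col M * (q1col M)ᵀ := by
    have := congrArg (fun B => B.map Complex.ofRealHom) hcompl
    simp only [Matrix.map_mul] at this
    refine Eq.trans this ?_
    ext i j
    simp [Matrix.vecMulVec_apply, q1r, q1col, Matrix.mul_apply, Matrix.one_apply, apply_ite]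
  have hMpos : (0 : ℝ) < M := by exact_mod_cast (by omega : 0 < M)
  have o3 : (q1col M)ᵀ * q1col M = 1 := by
    ext i j
    have : (M : ℝ) * ((√(M : ℝ))⁻¹ * (√(M : ℝ))⁻¹) = 1 := by
      rw [← mul_inv, Real.mul_self_sqrt hMpos.le, mul_inv_cancel₀ hMpos.ne']
    have h' := congrArg Complex.ofReal this
    push_cast at h'
    have hij : i = j := Subsingleton.elim _ _
    simpa [Matrix.mul_apply, q1col, Matrix.one_apply, hij] using h'
  have hq : (q1col M)ᴴ = (q1col M)ᵀ := by
    ext i j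
    simp [q1col]
  have hs : ((q1col M)ᵀ * (Ahat M κ1 κ2 ξ)⁻¹ * q1col M).PosDef := by
    rw [← hq]
    refine hA.inv.conjTranspose_mul_mul_same ?_
    intro x y hxy
    have := congrArg ((q1col M)ᵀ *ᵥ ·) hxy
    simpa [Matrix.mulVec_mulVec, o3] using this
  have dA : Ahat M κ1 κ2 ξ * (Ahat M κ1 κ2 ξ)⁻¹ = 1 :=
    Matrix.mul_nonsing_inv _ ((Matrix.isUnit_iff_isUnit_det _).1 hA.isUnit)
  have dS := Matrix.mul_nonsing_inv _ ((Matrix.isUnit_iff_isUnit_det _).1 hs.isUnit)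
  generalize (Ahat M κ1 κ2 ξ)⁻¹ = B at *
  generalize Ahat M κ1 κ2 ξ = A at *
  generalize Q2.map Complex.ofReal = Q at *
  generalize q1col M = q at *
  have o4 : Qᵀ * q = 0 := by
    have e : Qᵀ * (Q * Qᵀ) * q = Qᵀ * q := by rw [← Matrix.mul_assoc, o1, Matrix.one_mul]
    rw [o2, Matrix.mul_assoc, Matrix.sub_mul, Matrix.mul_assoc q, o3] at e
    simpa using e.symm
  generalize (qᵀ * B * q)⁻¹ = s at *
  have k : ∀ {n : ℕ} (X : Matrix (Fin M) (Fin n) ℂ),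
      (Qᵀ * A * Q) * (Qᵀ * B * X) = Qᵀ * X - Qᵀ * A * q * (qᵀ * B * X) := by
    intro n X
    calc _ = Qᵀ * A * (Q * Qᵀ) * (B * X) := by simp only [Matrix.mul_assoc]
      _ = Qᵀ * (A * B) * X - Qᵀ * A * q * (qᵀ * B * X) := by
        rw [o2]; simp only [Matrix.mul_sub, Matrix.sub_mul, Matrix.mul_assoc, Matrix.one_mul]
      _ = _ := by rw [dA, Matrix.mul_one]
  have main : (Qᵀ * A * Q) * (Qᵀ * B * Q - (Qᵀ * B * q) * s * (qᵀ * B * Q)) = 1 := by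
    rw [Matrix.mul_sub, ← Matrix.mul_assoc (Qᵀ * A * Q) (Qᵀ * B * q * s) _,
      ← Matrix.mul_assoc (Qᵀ * A * Q) (Qᵀ * B * q) s,
      k, k, o1, o4, zero_sub, Matrix.neg_mul, Matrix.neg_mul, Matrix.mul_assoc (Qᵀ * A * q) _ s,
      dS, Matrix.mul_one]
    abel
  exact ⟨IsUnit.of_mul_eq_one _ main, Matrix.inv_eq_right_inv main⟩
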